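/- (Perturbation of principal eigenfunctions: bound.) Assume Condition (★)(i)–(ii). Then for every i ∈ {1,…,n}, every s_i ∈ {1,…,d_i}, every initial condition (x_1,…,x_n), and every t ≥ 0, |ψ_{i,s_i}(Π_i ∘ Lin^{∘t}(x_1,…,x_n)) − ψ_{i,s_i}(L_i^{t} pert_i(x_1,…,x_i))| ≤ ‖ψ_{i,s_i}‖ · Σ_{j=1}^{i−1} ‖D_{i,j}‖ · ‖L_j^{t} pert_j(x_1,…,x_j)‖_{ℂ^{d_j}}. -/

import Mathlib

/-!
For `j ≤ i` the matrix `D_{i+1,j}` is built to solve the Sylvester equation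
`L_{i+1} D_{i+1,j} - D_{i+1,j} L_j = C_{i+1,i} D_{i,j}` (`Dmat_sylvester`): in eigencoordinates
both sides are compared entrywise, the spectral gap `1 - λ_{j,m}/λ_{i+1,ℓ}` being nonzero because
the spectra are disjoint. By induction on time, this gives the closed form of the solution
`x_i(t) = ∑_{j ≤ i} (-1)^{i-j} D_{i,j} L_j^t pert_j(x)` (`iterate_LinStep_eq`); at `t = 0` it is
the definition of `pert` solved for `x_i`. The term `j = i` is `L_i^t pert_i(x)`, so the difference
to be bounded is `ψ_{i,s}` applied to the remaining terms, and the triangle inequality together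
with the operator norm bounds concludes.
-/

open Matrix Finset Filter Topology

noncomputable section

/-- A matrix acting as a continuous linear map between Euclidean spaces. -/
def matCLM {p q : ℕ} (M : Matrix (Fin p) (Fin q) ℂ) :
    EuclideanSpace ℂ (Fin q) →L[ℂ] EuclideanSpace ℂ (Fin p) :=
  LinearMap.toContinuousLinearMap (Matrix.toEuclideanLin M)

/-- Operator norm of a matrix induced by the Euclidean norms. -/
def opN {p q : ℕ} (M : Matrix (Fin p) (Fin q) ℂ) : ℝ := ‖matCLM M‖

/-- One step of the chained linear cascade (levels indexed from `0`). -/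
def LinStep {d : ℕ → ℕ} (L : ∀ i, Matrix (Fin (d i)) (Fin (d i)) ℂ)
    (C : ∀ i, Matrix (Fin (d (i+1))) (Fin (d i)) ℂ)
    (x : ∀ i, EuclideanSpace ℂ (Fin (d i))) (i : ℕ) :
    EuclideanSpace ℂ (Fin (d i)) :=
  match i with
  | 0 => matCLM (L 0) (x 0)
  | (i+1) => matCLM (L (i+1)) (x (i+1)) + matCLM (C i) (x i)

/-- The matrices `D_{i,j}` of the paper (levels indexed from `0`). -/
def Dmat {d : ℕ → ℕ} (L : ∀ i, Matrix (Fin (d i)) (Fin (d i)) ℂ)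
    (C : ∀ i, Matrix (Fin (d (i+1))) (Fin (d i)) ℂ)
    (V : ∀ i, Matrix (Fin (d i)) (Fin (d i)) ℂ)
    (ev : ∀ i, Fin (d i) → ℂ) : ∀ i j : ℕ, Matrix (Fin (d i)) (Fin (d j)) ℂ
  | 0, 0 => 1
  | 0, _ + 1 => 0
  | i + 1, j =>
    if h : j = i + 1 then by subst h; exact 1
    else
      (L (i+1))⁻¹ * V (i+1) *
        Matrix.of (fun ℓ m =>
          ((V (i+1))⁻¹ * C i * Dmat L C V ev i j * V j) ℓ m
            * (1 - ev j m / ev (i+1) ℓ)⁻¹) * (V j)⁻¹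

/-- The perturbation maps `pert_i` of the paper (levels indexed from `0`). -/
def pert {d : ℕ → ℕ} (L : ∀ i, Matrix (Fin (d i)) (Fin (d i)) ℂ)
    (C : ∀ i, Matrix (Fin (d (i+1))) (Fin (d i)) ℂ)
    (V : ∀ i, Matrix (Fin (d i)) (Fin (d i)) ℂ)
    (ev : ∀ i, Fin (d i) → ℂ)
    (x : ∀ k, EuclideanSpace ℂ (Fin (d k))) : ∀ i : ℕ, EuclideanSpace ℂ (Fin (d i))
  | 0 => x 0
  | i + 1 => x (i+1) + ∑ j ∈ (Finset.range (i+1)).attach,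
      ((-1 : ℂ) ^ (i - j.1)) • matCLM (Dmat L C V ev (i+1) j.1) (pert L C V ev x j.1)
  termination_by i => i
  decreasing_by exact Finset.mem_range.mp j.2

/-- The `s`-th principal eigenfunction of component system `i`. -/
def psi {d : ℕ → ℕ} (V : ∀ i, Matrix (Fin (d i)) (Fin (d i)) ℂ) (i : ℕ) (s : Fin (d i)) :
    EuclideanSpace ℂ (Fin (d i)) →L[ℂ] ℂ :=
  (EuclideanSpace.proj s).comp (matCLM (V i)⁻¹)

lemma matCLM_mul {p q r : ℕ} (M : Matrix (Fin p) (Fin q) ℂ) (N : Matrix (Fin q) (Fin r) ℂ)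
    (v : EuclideanSpace ℂ (Fin r)) : matCLM (M * N) v = matCLM M (matCLM N v) := by
  simp [matCLM, Matrix.toLpLin_apply, Matrix.mulVec_mulVec]

lemma matCLM_one {p : ℕ} (v : EuclideanSpace ℂ (Fin p)) :
    matCLM (1 : Matrix (Fin p) (Fin p) ℂ) v = v := by
  simp [matCLM]

lemma matCLM_sub {p q : ℕ} (M N : Matrix (Fin p) (Fin q) ℂ) (v : EuclideanSpace ℂ (Fin q)) :
    matCLM (M - N) v = matCLM M v - matCLM N v := by
  simp [matCLM]

/-- The Sylvester equation `A X - X B = G` for diagonalized `A` and `B` with disjoint spectra,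
solved in eigencoordinates. -/
lemma sylvester_solution {p q : ℕ} (A V : Matrix (Fin p) (Fin p) ℂ)
    (B W : Matrix (Fin q) (Fin q) ℂ) (G : Matrix (Fin p) (Fin q) ℂ) (a : Fin p → ℂ)
    (b : Fin q → ℂ) (hA : A = V * Matrix.diagonal a * V⁻¹) (hB : B = W * Matrix.diagonal b * W⁻¹)
    (hV : IsUnit V) (hW : IsUnit W) (hAu : IsUnit A) (hab : ∀ ℓ m, a ℓ ≠ b m) :
    let X := A⁻¹ * V * Matrix.of (fun ℓ m => (V⁻¹ * G * W) ℓ m * (1 - b m / a ℓ)⁻¹) * W⁻¹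
    A * X - X * B = G := by
  intro X
  have hVd := (Matrix.isUnit_iff_isUnit_det V).1 hV
  have hWd := (Matrix.isUnit_iff_isUnit_det W).1 hW
  have hAd := (Matrix.isUnit_iff_isUnit_det A).1 hAu
  have hVV := Matrix.mul_nonsing_inv V hVd
  have hVV' := Matrix.nonsing_inv_mul V hVd
  have hWW := Matrix.mul_nonsing_inv W hWd
  have hWW' := Matrix.nonsing_inv_mul W hWd
  have ha : ∀ ℓ, a ℓ ≠ 0 := by
    have hdet : A.det = ∏ ℓ, a ℓ := by
      rw [hA, Matrix.det_conj hV, Matrix.det_diagonal]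
    have h0 := hAd.ne_zero
    rw [hdet] at h0
    exact fun ℓ => Finset.prod_ne_zero_iff.1 h0 ℓ (Finset.mem_univ _)
  have hAV : A⁻¹ * V = V * Matrix.diagonal (fun ℓ => (a ℓ)⁻¹) := by
    have h1 : A * (V * Matrix.diagonal (fun ℓ => (a ℓ)⁻¹)) = V := by
      have h2 : Matrix.diagonal a * Matrix.diagonal (fun ℓ => (a ℓ)⁻¹) = 1 := by
        rw [Matrix.diagonal_mul_diagonal, ← Matrix.diagonal_one]
        congr 1
        funext ℓ
        exact mul_inv_cancel₀ (ha ℓ)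
      calc A * (V * Matrix.diagonal (fun ℓ => (a ℓ)⁻¹))
          = V * (Matrix.diagonal a * ((V⁻¹ * V) * Matrix.diagonal (fun ℓ => (a ℓ)⁻¹))) := by
            rw [hA]; simp only [Matrix.mul_assoc]
        _ = V := by rw [hVV', Matrix.one_mul, h2, Matrix.mul_one]
    calc A⁻¹ * V = A⁻¹ * (A * (V * Matrix.diagonal (fun ℓ => (a ℓ)⁻¹))) := by rw [h1]
      _ = _ := by rw [← Matrix.mul_assoc, Matrix.nonsing_inv_mul A hAd, Matrix.one_mul]
  set K := Matrix.of (fun ℓ m => (V⁻¹ * G * W) ℓ m * (1 - b m / a ℓ)⁻¹) with hK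
  have hcore : K - Matrix.diagonal (fun ℓ => (a ℓ)⁻¹) * K * Matrix.diagonal b = V⁻¹ * G * W := by
    ext ℓ m
    have h1 : (1 - b m / a ℓ) ≠ 0 := by
      rw [sub_ne_zero]
      intro h
      exact hab ℓ m ((eq_div_iff (ha ℓ)).1 h ▸ (one_mul _).symm)
    rw [Matrix.sub_apply, Matrix.mul_diagonal, Matrix.diagonal_mul, hK, Matrix.of_apply]
    calc _ = (V⁻¹ * G * W) ℓ m * ((1 - b m / a ℓ)⁻¹ * (1 - b m / a ℓ)) := by ring
      _ = _ := by rw [inv_mul_cancel₀ h1, mul_one]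
  have hAX : A * X = V * K * W⁻¹ := by
    simp only [X, ← Matrix.mul_assoc]
    rw [Matrix.mul_nonsing_inv A hAd, Matrix.one_mul]
  have hXB : X * B = V * (Matrix.diagonal (fun ℓ => (a ℓ)⁻¹) * K * Matrix.diagonal b) * W⁻¹ := by
    calc X * B = A⁻¹ * V * K * ((W⁻¹ * W) * (Matrix.diagonal b * W⁻¹)) := by
          rw [show X = A⁻¹ * V * K * W⁻¹ from rfl, hB]; simp only [Matrix.mul_assoc]
      _ = _ := by rw [hWW', Matrix.one_mul, hAV]; simp only [Matrix.mul_assoc]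
  rw [hAX, hXB, ← Matrix.sub_mul, ← Matrix.mul_sub, hcore]
  calc V * (V⁻¹ * G * W) * W⁻¹ = (V * V⁻¹) * G * (W * W⁻¹) := by simp only [Matrix.mul_assoc]
    _ = G := by rw [hVV, hWW, Matrix.one_mul, Matrix.mul_one]

section Cascade

variable {d : ℕ → ℕ} (L : ∀ i, Matrix (Fin (d i)) (Fin (d i)) ℂ)
  (C : ∀ i, Matrix (Fin (d (i+1))) (Fin (d i)) ℂ)
  (V : ∀ i, Matrix (Fin (d i)) (Fin (d i)) ℂ)
  (ev : ∀ i, Fin (d i) → ℂ)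

lemma Dmat_self (i : ℕ) : Dmat L C V ev i i = 1 := by
  cases i with
  | zero => rw [Dmat]
  | succ i => rw [Dmat, dif_pos rfl]

lemma Dmat_sylvester (hdiag : ∀ i, L i = V i * Matrix.diagonal (ev i) * (V i)⁻¹)
    (hV : ∀ i, IsUnit (V i)) (hLu : ∀ i, IsUnit (L i))
    (hsp : ∀ i j : ℕ, i ≠ j → ∀ ℓ m, ev i ℓ ≠ ev j m) {i j : ℕ} (hj : j ≤ i) :
    L (i+1) * Dmat L C V ev (i+1) j - Dmat L C V ev (i+1) j * L j = C i * Dmat L C V ev i j := by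
  have hne : j ≠ i + 1 := by omega
  have h := sylvester_solution (L (i+1)) (V (i+1)) (L j) (V j) (C i * Dmat L C V ev i j)
    (ev (i+1)) (ev j) (hdiag _) (hdiag _) (hV _) (hV _) (hLu _) (hsp _ _ hne.symm)
  rw [Dmat, dif_neg hne]
  simpa only [Matrix.mul_assoc] using h

/-- The definition of `pert`, solved for the initial condition. -/
lemma eq_sum_pert (x : ∀ k, EuclideanSpace ℂ (Fin (d k))) (i : ℕ) :
    x i = ∑ j ∈ Finset.range (i+1),
      ((-1 : ℂ) ^ (i - j)) • matCLM (Dmat L C V ev i j) (pert L C V ev x j) := by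
  rw [Finset.sum_range_succ, Nat.sub_self, pow_zero, one_smul, Dmat_self, matCLM_one]
  cases i with
  | zero => simp [pert]
  | succ i =>
    have hp : pert L C V ev x (i+1) = x (i+1) + ∑ j ∈ Finset.range (i+1),
        ((-1 : ℂ) ^ (i - j)) • matCLM (Dmat L C V ev (i+1) j) (pert L C V ev x j) := by
      rw [pert]
      congr 1
      exact Finset.sum_attach (Finset.range (i+1)) fun j =>
        ((-1 : ℂ) ^ (i - j)) • matCLM (Dmat L C V ev (i+1) j) (pert L C V ev x j)
    have hs : ∑ j ∈ Finset.range (i+1),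
        ((-1 : ℂ) ^ (i + 1 - j)) • matCLM (Dmat L C V ev (i+1) j) (pert L C V ev x j)
        = - ∑ j ∈ Finset.range (i+1),
        ((-1 : ℂ) ^ (i - j)) • matCLM (Dmat L C V ev (i+1) j) (pert L C V ev x j) := by
      rw [← Finset.sum_neg_distrib]
      refine Finset.sum_congr rfl fun j hj => ?_
      have hji : j < i + 1 := Finset.mem_range.1 hj
      rw [Nat.succ_sub (by omega : j ≤ i), pow_succ, mul_neg_one, neg_smul]
    rw [hp, hs]
    abel

/-- Closed form of the solution of the cascade: a superposition of the decoupled linear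
evolutions of the perturbed initial conditions. -/
lemma iterate_LinStep_eq (hdiag : ∀ i, L i = V i * Matrix.diagonal (ev i) * (V i)⁻¹)
    (hV : ∀ i, IsUnit (V i)) (hLu : ∀ i, IsUnit (L i))
    (hsp : ∀ i j : ℕ, i ≠ j → ∀ ℓ m, ev i ℓ ≠ ev j m)
    (x : ∀ k, EuclideanSpace ℂ (Fin (d k))) (t i : ℕ) :
    (LinStep L C)^[t] x i = ∑ j ∈ Finset.range (i+1),
      ((-1 : ℂ) ^ (i - j)) •
        matCLM (Dmat L C V ev i j) (matCLM ((L j) ^ t) (pert L C V ev x j)) := by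
  induction t generalizing i with
  | zero => simpa only [pow_zero, matCLM_one, Function.iterate_zero, id] using
      eq_sum_pert L C V ev x i
  | succ t ih =>
    rw [Function.iterate_succ_apply']
    cases i with
    | zero =>
      simp only [LinStep, ih, zero_add, Finset.sum_range_one, Nat.sub_self, pow_zero, one_smul,
        Dmat_self, matCLM_one, pow_succ', matCLM_mul]
    | succ i =>
      simp only [LinStep]
      rw [ih, ih, Finset.sum_range_succ _ (i+1), Finset.sum_range_succ _ (i+1), map_add, map_sum,
        map_sum, add_right_comm, ← Finset.sum_add_distrib]
      congr 1
      · refine Finset.sum_congr rfl fun j hj => ?_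
        have hji : j ≤ i := Nat.lt_succ_iff.1 (Finset.mem_range.1 hj)
        -- The coupling term supplied by level `i` turns `L_{i+1} D_{i+1,j}` into `D_{i+1,j} L_j`.
        have h := congrArg (fun M => matCLM M (matCLM ((L j) ^ t) (pert L C V ev x j)))
          (Dmat_sylvester L C V ev hdiag hV hLu hsp hji)
        simp only [matCLM_sub, matCLM_mul] at h
        rw [map_smul, map_smul, ← h, pow_succ' (L j), matCLM_mul, Nat.succ_sub hji, pow_succ,
          mul_neg_one, neg_smul, neg_smul, smul_sub]
        abel
      · simp only [Nat.sub_self, pow_zero, one_smul, Dmat_self, matCLM_one, pow_succ', matCLM_mul]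

end Cascade

/-- perturbation of principal eigenfunctions: bound, Condition (★)(i)–(ii).
Levels are indexed from `0` (the paper's level `i ∈ {1,…,n}` is any `i : ℕ` here), so the
paper's sum `∑_{j=1}^{i−1}` becomes `j ∈ Finset.range i`. The absolute value on `ℂ` is `‖·‖`
and `‖psi V i s‖` is the operator norm of the principal eigenfunction. -/
theorem stmt8 {d : ℕ → ℕ} (L : ∀ i, Matrix (Fin (d i)) (Fin (d i)) ℂ)
    (C : ∀ i, Matrix (Fin (d (i+1))) (Fin (d i)) ℂ)
    (V : ∀ i, Matrix (Fin (d i)) (Fin (d i)) ℂ)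
    (ev : ∀ i, Fin (d i) → ℂ)
    (hdiag : ∀ i, L i = V i * Matrix.diagonal (ev i) * (V i)⁻¹)
    (hV : ∀ i, IsUnit (V i))
    (hLu : ∀ i, IsUnit (L i))
    (hsp : ∀ i j : ℕ, i ≠ j → ∀ ℓ m, ev i ℓ ≠ ev j m)
    (x : ∀ i, EuclideanSpace ℂ (Fin (d i))) (i : ℕ) (s : Fin (d i)) (t : ℕ) :
    ‖psi V i s ((LinStep L C)^[t] x i)
        - psi V i s (matCLM ((L i) ^ t) (pert L C V ev x i))‖
      ≤ ‖psi V i s‖ * ∑ j ∈ Finset.range i,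
          opN (Dmat L C V ev i j) * ‖matCLM ((L j) ^ t) (pert L C V ev x j)‖ := by
  have key := iterate_LinStep_eq L C V ev hdiag hV hLu hsp x t i
  rw [Finset.sum_range_succ, Nat.sub_self, pow_zero, one_smul, Dmat_self, matCLM_one] at key
  rw [key, ← map_sub, add_sub_cancel_right]
  refine ((psi V i s).le_opNorm _).trans ?_
  refine mul_le_mul_of_nonneg_left ?_ (norm_nonneg _)
  refine (norm_sum_le _ _).trans (Finset.sum_le_sum fun j _ => ?_)
  rw [norm_smul, norm_pow, norm_neg, norm_one, one_pow, one_mul]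
  exact (matCLM (Dmat L C V ev i j)).le_opNorm _
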